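/- Let n ≥ 2 and let c : Fin n → Fin n → ℝ be symmetric, i.e. c k l = c l k for all k, l. Suppose that for every ρ ∈ ℂⁿ belonging to the isotropic set V := {ρ ∈ ℂⁿ : Σ_j ρ_j² = 0 and ‖ρ‖ = √2} one has Σ_{k,l} ρ_k ρ_l · (c k l) = 0. Then c k l = 0 whenever k ≠ l, and c k k = c l l for all k, l. -/

import Mathlib

/-!
The quadratic form `∑ ρ_i ρ_j c i j` takes the value `c k k ± i (c k l + c l k) - c l l` at
`e_k ± i e_l`, which is isotropic of norm `√2` for `k ≠ l`. Using both signs separates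
`c k l + c l k` from `c k k - c l l`.
-/

/-- The isotropic set `V` of `ℂ^ι`: the null vectors of the complex bilinear dot product,
normalized to Hermitian norm `√2` so that it contains `e_k ± i e_l` for `k ≠ l`. -/
def isotropicSet (ι : Type*) [Fintype ι] : Set (EuclideanSpace ℂ ι) :=
  {ρ | ∑ j, ρ j ^ 2 = 0 ∧ ‖ρ‖ = √2}

section

variable {ι : Type*} [Fintype ι]

section Single

variable [DecidableEq ι]

theorem sum_single_add_single_mul {R : Type*} [NonUnitalNonAssocSemiring R] (k l : ι) (a b : R)
    (f : ι → R) : ∑ j, (Pi.single k a + Pi.single l b : ι → R) j * f j = a * f k + b * f l := by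
  change (Pi.single k a + Pi.single l b) ⬝ᵥ f = _
  rw [add_dotProduct, single_dotProduct, single_dotProduct]

theorem sum_single_add_single_sq {R : Type*} [Semiring R] {k l : ι} (hkl : k ≠ l) (a b : R) :
    ∑ j, (Pi.single k a + Pi.single l b : ι → R) j ^ 2 = a ^ 2 + b ^ 2 := by
  simp only [sq, sum_single_add_single_mul]
  simp [hkl, hkl.symm]

theorem sum_sum_single_add_single_mul {R : Type*} [CommSemiring R] (c : ι → ι → R) (k l : ι)
    (a b : R) :
    ∑ i, ∑ j, (Pi.single k a + Pi.single l b : ι → R) i *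
        (Pi.single k a + Pi.single l b : ι → R) j * c i j =
      a ^ 2 * c k k + a * b * (c k l + c l k) + b ^ 2 * c l l := by
  simp only [mul_assoc, ← Finset.mul_sum, sum_single_add_single_mul]
  ring

theorem norm_sq_single_add_single {𝕜 : Type*} [RCLike 𝕜] {k l : ι} (hkl : k ≠ l)
    (a b : 𝕜) :
    ‖EuclideanSpace.single k a + EuclideanSpace.single l b‖ ^ 2 = ‖a‖ ^ 2 + ‖b‖ ^ 2 := by
  have orthogonal : inner 𝕜 (EuclideanSpace.single k a) (EuclideanSpace.single l b) = 0 := by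
    simp [EuclideanSpace.inner_single_left, hkl]
  simpa [sq] using norm_add_sq_eq_norm_sq_add_norm_sq_of_inner_eq_zero _ _ orthogonal

theorem single_add_single_mem_isotropicSet {k l : ι} (hkl : k ≠ l) {a : ℂ} (ha : a ^ 2 = -1) :
    EuclideanSpace.single k 1 + EuclideanSpace.single l a ∈ isotropicSet ι := by
  have norm_sq_a : ‖a‖ ^ 2 = 1 := by rw [← norm_pow, ha, norm_neg, norm_one]
  constructor
  · exact (sum_single_add_single_sq hkl 1 a).trans (by rw [ha, one_pow, add_neg_cancel])
  · rw [eq_comm, Real.sqrt_eq_iff_eq_sq zero_le_two (norm_nonneg _),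
      norm_sq_single_add_single hkl, norm_sq_a, norm_one]
    norm_num

end Single

theorem add_swap_eq_zero_and_diag_eq_of_isotropicSet {c : ι → ι → ℂ}
    (hvan : ∀ ρ ∈ isotropicSet ι, ∑ k, ∑ l, ρ k * ρ l * c k l = 0) {k l : ι} (hkl : k ≠ l) :
    c k l + c l k = 0 ∧ c k k = c l l := by
  classical
  have value (a : ℂ) (ha : a ^ 2 = -1) : c k k + a * (c k l + c l k) - c l l = 0 := by
    have h := hvan _ (single_add_single_mem_isotropicSet hkl ha)
    simp only [PiLp.add_apply, PiLp.ofLp_single, ← Pi.add_apply,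
      sum_sum_single_add_single_mul] at h
    linear_combination h - c l l * ha
  have value_I := value Complex.I Complex.I_sq
  have value_neg_I := value (-Complex.I) (by rw [neg_sq, Complex.I_sq])
  constructor
  · linear_combination -(Complex.I / 2) * (value_I - value_neg_I) +
      (c k l + c l k) * Complex.I_sq
  · linear_combination (value_I + value_neg_I) / 2

theorem stmt_1_general {c : ι → ι → ℂ} (hsym : ∀ k l, c k l = c l k)
    (hvan : ∀ ρ ∈ isotropicSet ι, ∑ k, ∑ l, ρ k * ρ l * c k l = 0) :
    (∀ k l, k ≠ l → c k l = 0) ∧ (∀ k l, c k k = c l l) := by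
  have entries {k l : ι} := add_swap_eq_zero_and_diag_eq_of_isotropicSet hvan
    (k := k) (l := l)
  refine ⟨fun k l hkl => ?_, fun k l => ?_⟩
  · linear_combination (entries hkl).1 / 2 + hsym k l / 2
  · obtain rfl | hkl := eq_or_ne k l
    exacts [rfl, (entries hkl).2]

end

/-- If a symmetric matrix of coefficients `c k l` satisfies
`∑_{k,l} ρ_k ρ_l c_{kl} = 0` for every isotropic vector `ρ ∈ ℂⁿ` with
`∑ ρ_j² = 0` and `‖ρ‖ = √2`, then the off-diagonal entries vanish and the
diagonal entries are all equal. -/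
theorem stmt_1 (n : ℕ) (hn : 2 ≤ n) (c : Fin n → Fin n → ℝ)
    (hsym : ∀ k l, c k l = c l k)
    (hvan : ∀ ρ : EuclideanSpace ℂ (Fin n),
      (∑ j, ρ j ^ 2 = 0) → ‖ρ‖ = Real.sqrt 2 →
      ∑ k, ∑ l, ρ k * ρ l * (c k l : ℂ) = 0) :
    (∀ k l, k ≠ l → c k l = 0) ∧ (∀ k l, c k k = c l l) := by
  exact_mod_cast stmt_1_general (c := fun k l => (c k l : ℂ)) (by simpa using hsym)
    fun ρ hρ => hvan ρ hρ.1 hρ.2
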